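/- arXiv:0810.4824 — 2 statements merged into one kernel-verified Lean document; each statement's English description precedes it below -/
import Mathlib

section
/- Assume f : ℝ³ → ℝ is smooth, strictly positive, and satisfies two-sided Gaussian bounds c e^{−a‖v‖²} ≤ f(v) ≤ C e^{−b‖v‖²} (with 0 < c ≤ C, a ≥ b > 0), with all partial derivatives of f decaying faster than any polynomial. Then the Lorentz electron–ion collision operator conserves mass and kinetic energy: ∫_{ℝ³} C_L(f)(v) dv = 0 and ∫_{ℝ³} C_L(f)(v) ‖v‖² dv = 0. -/
/-!
The matrix `Φ(v)` is the (weighted) projection onto the plane orthogonal to `v`, so the flux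
`F(v) = Φ(v) ∇f(v)` is tangent to the spheres centred at the origin (`sum_mul_Phi_mulVec`). Hence,
for every radial weight `φ(‖v‖²)`, one has `∇ · (φ(‖v‖²) F) = φ(‖v‖²) C_L f`
(`div3_radial_smul_flux`). If `φ` is supported in a compact subset of `(0, ∞)`, the field
`φ(‖v‖²) F` is `C¹` with compact support, the singularity of `Φ` at the origin being cut off, and
its divergence integrates to zero (`integral_annular_weight`).

For a weight `w(‖v‖²)`, with `w = 1` for mass and `w = id` for energy, multiply by radial cutoffs
that tend to `1` off the origin and pass to the limit by dominated convergence, with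
`|C_L f · w|` itself as the dominating function (`integral_CL_mul_radial`). Tangency of the flux
means that no boundary term arises at the origin or at infinity. When the integrand is not integrable its Bochner
integral is `0` by convention, so integrability need not be established.
-/

open MeasureTheory Real
open scoped BigOperators Classical

noncomputable section

/-- ℝ³ as functions `Fin 3 → ℝ`. -/
abbrev V3 := Fin 3 → ℝ

/-- Squared Euclidean norm on ℝ³. -/
def nsq (v : V3) : ℝ := ∑ s, v s ^ 2

/-- Φ(u) = (‖u‖² Id − u ⊗ u)/‖u‖³ for u ≠ 0, and Φ(0) = 0. -/
def Phi (u : V3) : Matrix (Fin 3) (Fin 3) ℝ :=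
  if u = 0 then 0
  else ((Real.sqrt (nsq u)) ^ 3)⁻¹ •
    (nsq u • (1 : Matrix (Fin 3) (Fin 3) ℝ) - Matrix.vecMulVec u u)

/-- Gradient of a scalar function on ℝ³. -/
def grad (f : V3 → ℝ) (v : V3) : V3 := fun s => fderiv ℝ f v (Pi.single s 1)

/-- Divergence of a vector field on ℝ³. -/
def div3 (F : V3 → V3) (v : V3) : ℝ := ∑ s, fderiv ℝ F v (Pi.single s 1) s

/-- The inner (flux) integral of the Fokker–Planck–Landau operator. -/
def landauFlux (f : V3 → ℝ) (v : V3) : V3 :=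
  ∫ w : V3, (Phi (v - w)).mulVec (f w • grad f v - f v • grad f w)

/-- The Fokker–Planck–Landau collision operator `C(f,f) = ∇_v · landauFlux`. -/
def Cff (f : V3 → ℝ) (v : V3) : ℝ := div3 (landauFlux f) v

/-- The Lorentz electron–ion collision operator `C_L(f) = ∇_v · (Φ(v) ∇_v f)`. -/
def CL (f : V3 → ℝ) (v : V3) : ℝ := div3 (fun w => (Phi w).mulVec (grad f w)) v

lemma contDiff_nsq {n : WithTop ℕ∞} : ContDiff ℝ n nsq := by
  unfold nsq
  fun_prop

lemma nsq_pos {v : V3} (hv : v ≠ 0) : 0 < nsq v := by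
  obtain ⟨i, hi⟩ := Function.ne_iff.mp hv
  exact Finset.sum_pos' (fun s _ => sq_nonneg _) ⟨i, Finset.mem_univ i, sq_pos_of_ne_zero hi⟩

lemma fderiv_nsq_single (v : V3) (s : Fin 3) :
    fderiv ℝ nsq v (Pi.single s 1) = 2 * v s := by
  have h : HasFDerivAt nsq
      (∑ t : Fin 3, (2 * v t) • (ContinuousLinearMap.proj t : V3 →L[ℝ] ℝ)) v := by
    unfold nsq
    refine HasFDerivAt.fun_sum fun t _ => ?_
    simpa using (ContinuousLinearMap.proj (R := ℝ) (φ := fun _ : Fin 3 => ℝ) t).hasFDerivAt.pow 2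
      (x := v)
  rw [h.fderiv]
  simp [Pi.single_apply]

/-- The explicit form of `Φ(u) g` away from the origin. -/
lemma Phi_mulVec {u : V3} (hu : u ≠ 0) (g : V3) (i : Fin 3) :
    (Phi u).mulVec g i = (Real.sqrt (nsq u) ^ 3)⁻¹ * (nsq u * g i - u i * ∑ j, u j * g j) := by
  simp only [Phi, if_neg hu, Matrix.smul_mulVec, Matrix.sub_mulVec, Matrix.one_mulVec,
    Matrix.vecMulVec_mulVec, Pi.smul_apply, Pi.sub_apply, smul_eq_mul, dotProduct]
  simp [mul_comm]

/-- The range of `Φ(u)` is orthogonal to `u`. -/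
lemma sum_mul_Phi_mulVec (u g : V3) : ∑ i, u i * (Phi u).mulVec g i = 0 := by
  by_cases hu : u = 0
  · simp [hu]
  · simp only [Phi_mulVec hu, nsq, Fin.sum_univ_three]
    ring

lemma contDiffAt_flux {f : V3 → ℝ} (hf : ContDiff ℝ (⊤ : ℕ∞) f) {v : V3} (hv : v ≠ 0) :
    ContDiffAt ℝ 1 (fun w => (Phi w).mulVec (grad f w)) v := by
  have hg : ∀ j, ContDiff ℝ 1 (fun w => grad f w j) := fun j =>
    (hf.fderiv_right (m := 1) (by norm_cast)).clm_apply contDiff_const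
  have hn : ContDiffAt ℝ 1 nsq v := contDiff_nsq.contDiffAt
  have hx : ∀ j, ContDiffAt ℝ 1 (fun w : V3 => w j) v := fun j =>
    (contDiff_apply ℝ ℝ j).contDiffAt
  refine contDiffAt_pi.2 fun i => ?_
  have h : ContDiffAt ℝ 1 (fun w : V3 => (Real.sqrt (nsq w) ^ 3)⁻¹ *
      (nsq w * grad f w i - w i * ∑ j, w j * grad f w j)) v := by
    refine ContDiffAt.mul (ContDiffAt.inv ((hn.sqrt (nsq_pos hv).ne').pow 3) ?_) ?_
    · exact pow_ne_zero _ (Real.sqrt_pos.2 (nsq_pos hv)).ne'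
    · exact (hn.mul (hg i).contDiffAt).sub ((hx i).mul
        (ContDiffAt.sum fun j _ => (hx j).mul (hg j).contDiffAt))
  refine h.congr_of_eventuallyEq ?_
  filter_upwards [isOpen_ne.mem_nhds hv] with w hw
  exact Phi_mulVec hw _ i

lemma integral_fderiv_eq_zero {h : V3 → ℝ} (hh : ContDiff ℝ 1 h) (hc : HasCompactSupport h)
    (e : V3) : ∫ v, fderiv ℝ h v e = 0 := by
  have hi : Integrable (fun v => fderiv ℝ h v e) :=
    (hh.continuous_fderiv_apply one_ne_zero |>.comp (by fun_prop :
      Continuous fun v : V3 => (v, e))).integrable_of_hasCompactSupport (hc.fderiv_apply ℝ e)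
  have := integral_mul_fderiv_eq_neg_fderiv_mul_of_integrable (μ := (volume : Measure V3))
    (f := fun _ : V3 => (1 : ℝ)) (g := h) (v := e) (by simp) (by simpa using hi)
    (by simpa using hh.continuous.integrable_of_hasCompactSupport hc)
    (fun _ _ => differentiableAt_const _) (fun x _ => hh.differentiable one_ne_zero x)
  simpa using this

/-- The divergence theorem for compactly supported fields. -/
lemma integral_div3_eq_zero {H : V3 → V3} (hH : ContDiff ℝ 1 H) (hc : HasCompactSupport H) :
    ∫ v, div3 H v = 0 := by
  have hcomp : ∀ s, ContDiff ℝ 1 (fun v => H v s) := contDiff_pi.1 hH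
  have hcs : ∀ s, HasCompactSupport (fun v => H v s) := fun s =>
    hc.comp_left (g := fun x : V3 => x s) rfl
  have heq : ∀ v, div3 H v = ∑ s, fderiv ℝ (fun w => H w s) v (Pi.single s 1) := fun v => by
    refine Finset.sum_congr rfl fun s _ => ?_
    rw [fderiv_apply (hH.differentiable one_ne_zero v) s]
    rfl
  simp only [heq]
  rw [integral_finsetSum]
  · exact Finset.sum_eq_zero fun s _ => integral_fderiv_eq_zero (hcomp s) (hcs s) _
  · intro s _
    exact ((hcomp s).continuous_fderiv_apply one_ne_zero |>.comp (by fun_prop :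
      Continuous fun v : V3 => (v, Pi.single s 1))).integrable_of_hasCompactSupport
        ((hcs s).fderiv_apply ℝ _)

/-- A radial factor commutes with the Lorentz operator: the term in which the derivative falls on
the factor is proportional to `v · Φ(v) ∇f(v) = 0`. -/
lemma div3_radial_smul_flux {f : V3 → ℝ} (hf : ContDiff ℝ (⊤ : ℕ∞) f) {φ : ℝ → ℝ}
    (hφ : ContDiff ℝ 1 φ) {v : V3} (hv : v ≠ 0) :
    div3 (fun w => φ (nsq w) • (Phi w).mulVec (grad f w)) v = φ (nsq v) * CL f v := by
  have hF := (contDiffAt_flux hf hv).differentiableAt one_ne_zero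
  have hn : DifferentiableAt ℝ nsq v := (contDiff_nsq (n := 1)).differentiable one_ne_zero v
  have hφ' : DifferentiableAt ℝ φ (nsq v) := hφ.differentiable one_ne_zero _
  have hc : HasFDerivAt (fun w => φ (nsq w)) (deriv φ (nsq v) • fderiv ℝ nsq v) v :=
    hφ'.hasDerivAt.comp_hasFDerivAt v hn.hasFDerivAt
  have hd := (hc.smul hF.hasFDerivAt).fderiv
  have h0 := sum_mul_Phi_mulVec v (grad f v)
  simp only [CL, div3]
  change ∑ s, fderiv ℝ ((fun w => φ (nsq w)) • fun w => (Phi w).mulVec (grad f w)) v _ s = _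
  rw [hd]
  simp only [add_apply, smul_apply,
    ContinuousLinearMap.smulRight_apply, Pi.add_apply, Pi.smul_apply, smul_eq_mul,
    fderiv_nsq_single, Finset.sum_add_distrib, ← Finset.mul_sum]
  rw [add_eq_left]
  calc _ = 2 * deriv φ (nsq v) * ∑ i, v i * (Phi v).mulVec (grad f v) i := by
        rw [Finset.mul_sum]
        exact Finset.sum_congr rfl fun s _ => by ring
    _ = 0 := by rw [h0, mul_zero]

/-- Vanishing of the radial moments of `C_L f` whose weight is supported in an annulus. -/
lemma integral_annular_weight {f : V3 → ℝ} (hf : ContDiff ℝ (⊤ : ℕ∞) f) {φ : ℝ → ℝ}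
    (hφ : ContDiff ℝ 1 φ) {δ R : ℝ} (hδ : 0 < δ) (hlo : ∀ s ≤ δ, φ s = 0)
    (hhi : ∀ s, R ≤ s → φ s = 0) :
    ∫ v, φ (nsq v) * CL f v = 0 := by
  set H : V3 → V3 := fun w => φ (nsq w) • (Phi w).mulVec (grad f w) with hH
  have hzero : H =ᶠ[nhds 0] fun _ => 0 := by
    have : ∀ᶠ w in nhds (0 : V3), nsq w < δ :=
      (contDiff_nsq (n := 1)).continuous.continuousAt.eventually_lt continuousAt_const
        (by simpa [nsq] using hδ)
    filter_upwards [this] with w hw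
    simp [hH, hlo _ hw.le]
  have hsm : ContDiff ℝ 1 H := by
    refine contDiff_iff_contDiffAt.2 fun v => ?_
    by_cases hv : v = 0
    · subst hv
      exact contDiffAt_const.congr_of_eventuallyEq hzero
    · exact (hφ.comp contDiff_nsq).contDiffAt.smul (contDiffAt_flux hf hv)
  have hcs : HasCompactSupport H := by
    refine HasCompactSupport.intro (isCompact_closedBall (0 : V3) (Real.sqrt R)) fun v hv => ?_
    have hv' : Real.sqrt R < ‖v‖ := by simpa using hv
    obtain ⟨i, hi⟩ : ∃ i, Real.sqrt R < ‖v i‖ := by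
      by_contra! hcon
      exact hv'.not_ge ((pi_norm_le_iff_of_nonneg (Real.sqrt_nonneg R)).2 hcon)
    have h1 : R ≤ v i ^ 2 := by
      have := (Real.sqrt_lt_sqrt_iff_of_pos (x := R) (y := v i ^ 2)
        (by have := (Real.sqrt_nonneg R).trans_lt hi
            have h2 : v i ≠ 0 := norm_pos_iff.1 this
            positivity)).1 (by rwa [Real.sqrt_sq_eq_abs])
      exact this.le
    have h2 : v i ^ 2 ≤ nsq v :=
      Finset.single_le_sum (f := fun s => v s ^ 2) (fun s _ => sq_nonneg _) (Finset.mem_univ i)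
    simp [hH, hhi _ (h1.trans h2)]
  rw [← integral_div3_eq_zero hsm hcs]
  congr 1
  ext v
  by_cases hv : v = 0
  · subst hv
    simp [div3, hzero.fderiv_eq, hlo _ (show nsq 0 ≤ δ by simpa [nsq] using hδ.le)]
  · exact (div3_radial_smul_flux hf hφ hv).symm

/-- A smooth cutoff on `ℝ`, equal to `1` on `[2/n, n - 1]` and vanishing off `[1/n, n]`. -/
def cutoff (n : ℕ) (s : ℝ) : ℝ :=
  Real.smoothTransition (n * s - 1) * Real.smoothTransition (n - s)

lemma contDiff_cutoff (n : ℕ) : ContDiff ℝ 1 (cutoff n) :=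
  ((Real.smoothTransition.contDiff (n := 1)).comp (by fun_prop)).mul
    ((Real.smoothTransition.contDiff (n := 1)).comp (by fun_prop))

lemma abs_cutoff_le_one (n : ℕ) (s : ℝ) : |cutoff n s| ≤ 1 := by
  rw [cutoff, abs_of_nonneg (mul_nonneg (Real.smoothTransition.nonneg _)
    (Real.smoothTransition.nonneg _))]
  exact mul_le_one₀ (Real.smoothTransition.le_one _) (Real.smoothTransition.nonneg _)
    (Real.smoothTransition.le_one _)

lemma cutoff_eventually_eq_one {s : ℝ} (hs : 0 < s) :
    ∀ᶠ n : ℕ in Filter.atTop, cutoff n s = 1 := by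
  filter_upwards [tendsto_natCast_atTop_atTop.eventually_ge_atTop (2 / s),
    tendsto_natCast_atTop_atTop.eventually_ge_atTop (s + 1)] with n h1 h2
  rw [div_le_iff₀ hs] at h1
  rw [cutoff, Real.smoothTransition.one_of_one_le (by linarith),
    Real.smoothTransition.one_of_one_le (by linarith), mul_one]

lemma integral_annular_cutoff {f : V3 → ℝ} (hf : ContDiff ℝ (⊤ : ℕ∞) f) {w : ℝ → ℝ}
    (hw : ContDiff ℝ 1 w) (n : ℕ) :
    ∫ v, cutoff n (nsq v) * (CL f v * w (nsq v)) = 0 := by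
  have key := integral_annular_weight hf (φ := fun s => cutoff n s * w s)
    ((contDiff_cutoff n).mul hw) (δ := 1 / (n + 1)) (R := n) (by positivity) ?_ ?_
  · rw [← key]
    congr 1
    ext v
    ring
  · intro s hs
    rw [le_div_iff₀ (by positivity)] at hs
    have : (n : ℝ) * s - 1 ≤ 0 := by
      rcases le_or_gt 0 s with h | h
      · linarith
      · nlinarith [(Nat.cast_nonneg n : (0 : ℝ) ≤ n)]
    simp [cutoff, Real.smoothTransition.zero_of_nonpos this]
  · intro s hs
    simp [cutoff, Real.smoothTransition.zero_of_nonpos (sub_nonpos.2 hs)]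

/-- Every smooth radial moment of `C_L f` vanishes. -/
lemma integral_CL_mul_radial {f : V3 → ℝ} (hf : ContDiff ℝ (⊤ : ℕ∞) f) {w : ℝ → ℝ}
    (hw : ContDiff ℝ 1 w) : ∫ v, CL f v * w (nsq v) = 0 := by
  -- A non-integrable integrand has Bochner integral `0` by convention.
  by_cases hG : Integrable (fun v => CL f v * w (nsq v))
  swap
  · exact integral_undef hG
  have hlim := tendsto_integral_of_dominated_convergence (μ := (volume : Measure V3))
    (F := fun n v => cutoff n (nsq v) * (CL f v * w (nsq v)))
    (f := fun v => CL f v * w (nsq v)) (fun v => ‖CL f v * w (nsq v)‖)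
    (fun n => (((contDiff_cutoff n).continuous.comp
      (contDiff_nsq (n := 1)).continuous).aestronglyMeasurable).mul hG.aestronglyMeasurable)
    hG.norm
    (fun n => Filter.Eventually.of_forall fun v => by
      rw [norm_mul]
      exact mul_le_of_le_one_left (norm_nonneg _) (abs_cutoff_le_one n _))
    (by
      -- At the origin the cutoffs are `0`, so convergence holds only off a null set.
      filter_upwards [Measure.ae_ne volume (0 : V3)] with v hv
      refine tendsto_const_nhds.congr' ?_
      filter_upwards [cutoff_eventually_eq_one (nsq_pos hv)] with n hn
      rw [hn, one_mul])
  simp only [integral_annular_cutoff hf hw] at hlim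
  exact (tendsto_nhds_unique tendsto_const_nhds hlim).symm

/-- the Lorentz electron–ion collision operator conserves mass and
kinetic energy. -/
theorem lorentz_conserves_mass_energy
    (f : V3 → ℝ) (hf : ContDiff ℝ (⊤ : ℕ∞) f) (hpos : ∀ v, 0 < f v)
    (c C a b : ℝ) (hc : 0 < c) (hcC : c ≤ C) (hb : 0 < b) (hba : b ≤ a)
    (hlow : ∀ v, c * Real.exp (-a * nsq v) ≤ f v)
    (hup : ∀ v, f v ≤ C * Real.exp (-b * nsq v))
    (hdecay : ∀ n k : ℕ, ∃ M : ℝ, ∀ v : V3, ‖v‖ ^ k * ‖iteratedFDeriv ℝ n f v‖ ≤ M) :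
    (∫ v : V3, CL f v) = 0 ∧ (∫ v : V3, CL f v * nsq v) = 0 := by
  refine ⟨?_, integral_CL_mul_radial hf (w := fun s => s) contDiff_id⟩
  simpa using integral_CL_mul_radial hf (w := fun _ => 1) contDiff_const
end
end

section
/- Fix Δv > 0 and grid points v_j = jΔv for j ∈ ℤ³. Let f : ℤ³ → ℝ with f_j > 0 for all j, and assume f decays fast enough (e.g. Gaussian-type decay with |log f_j| of polynomial growth) that Σ_j ‖g^ε_j‖ (1 + ‖v_j‖²) < ∞ for every ε ∈ {−1,+1}³, where g^ε is the discrete Lorentz flux. Then, thanks to the compatibility choice ṽ_j^ε = (v_j + v_{j+ε})/2 (for which the s-th component of D^ε(‖v‖²) at j equals 2(ṽ_j^ε)_s, and S(ṽ_j^ε) ṽ_j^ε = 0), the discrete Lorentz operator conserves the discrete kinetic energy: Σ_{j∈ℤ³} C^{Δv}(f)(v_j) ‖v_j‖² = 0. -/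
/-!
Summation by parts moves the difference operator from the flux `g^ε` onto the weight `‖v_j‖²`;
the decay hypothesis makes all the series absolutely convergent, because the weight at a neighbouring
grid point is at most `(2 + 2Δv²)(1 + ‖v_j‖²)`. Since `D^ε(‖v‖²)_j = 2 ṽ_j^ε` (`sgn_mul_nsq_shift_sub`),
what remains is `-2 Σ_j g^ε_j · ṽ_j^ε`, and each term vanishes because `S(ṽ)` is symmetric with
`S(ṽ) ṽ = 0` (`sum_gflux_mul_vtilde`).
-/


open scoped BigOperators Classical

noncomputable section

/-- Velocity indices: ℤ³. -/
abbrev J3 := Fin 3 → ℤ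

/-- The sign ε_s ∈ {−1,+1} encoded by a boolean. -/
def sgn (σ : Fin 3 → Bool) (s : Fin 3) : ℤ := if σ s then 1 else -1

/-- The velocity grid point v_j = jΔv. -/
def vj (Δv : ℝ) (j : J3) : V3 := fun s => (j s : ℝ) * Δv

/-- Uncentered difference operator `D^ε`: the s-th component of `(D^ε ψ)_j` is
`ε_s (ψ_{j+ε_s e_s} − ψ_j)/Δv`. -/
def Dd (Δv : ℝ) (σ : Fin 3 → Bool) (ψ : J3 → ℝ) (j : J3) : V3 :=
  fun s => (sgn σ s : ℝ) * (ψ (Function.update j s (j s + sgn σ s)) - ψ j) / Δv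

/-- Formal ℓ²-adjoint of `D^ε` on vector sequences:
`(D^{*,ε} g)_j = −Σ_s ε_s (g_{j,s} − g_{j−ε_s e_s,s})/Δv`. -/
def Dstar (Δv : ℝ) (σ : Fin 3 → Bool) (g : J3 → V3) (j : J3) : ℝ :=
  -∑ s, (sgn σ s : ℝ) * (g j s - g (Function.update j s (j s - sgn σ s)) s) / Δv

/-- S(w) = ‖w‖² Id − w ⊗ w. -/
def Smat (w : V3) : Matrix (Fin 3) (Fin 3) ℝ :=
  nsq w • (1 : Matrix (Fin 3) (Fin 3) ℝ) - Matrix.vecMulVec w w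

/-- The averaged grid point ṽ_j^ε = (v_j + v_{j+ε})/2. -/
def vtilde (Δv : ℝ) (σ : Fin 3 → Bool) (j : J3) : V3 :=
  fun s => (vj Δv j s + vj Δv (fun t => j t + sgn σ t) s) / 2

/-- The discrete Lorentz flux
`g^ε_j = ‖v_j‖⁻³ S(ṽ_j^ε) f_j D^ε(log f)_j` (and `0` at `v_j = 0`). -/
def gflux (Δv : ℝ) (σ : Fin 3 → Bool) (f : J3 → ℝ) (j : J3) : V3 :=
  if vj Δv j = 0 then 0
  else ((Real.sqrt (nsq (vj Δv j))) ^ 3)⁻¹ •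
    (Smat (vtilde Δv σ j)).mulVec (f j • Dd Δv σ (fun i => Real.log (f i)) j)

/-- The discrete Lorentz operator, averaged over the eight uncentered discretizations:
`C^{Δv}(f)(v_j) = (1/8) Σ_ε (−D^{*,ε} g^ε)_j`. -/
def CLdisc (Δv : ℝ) (f : J3 → ℝ) (j : J3) : ℝ :=
  (1 / 8) * ∑ σ : Fin 3 → Bool, -Dstar Δv σ (gflux Δv σ f) j

lemma update_add_eq (j : J3) (s : Fin 3) (c : ℤ) :
    Function.update j s (j s + c) = j + Pi.single s c := by
  ext t
  by_cases h : t = s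
  · subst h; simp
  · simp [h]

lemma update_sub_eq (j : J3) (s : Fin 3) (c : ℤ) :
    Function.update j s (j s - c) = j - Pi.single s c := by
  ext t
  by_cases h : t = s
  · subst h; simp
  · simp [h]

lemma sgn_mul_self (σ : Fin 3 → Bool) (s : Fin 3) : (sgn σ s : ℝ) * sgn σ s = 1 := by
  unfold sgn; split_ifs <;> norm_num

lemma nsq_nonneg (v : V3) : 0 ≤ nsq v := Finset.sum_nonneg fun s _ => sq_nonneg (v s)

lemma nsq_shift (Δv : ℝ) (j : J3) (s : Fin 3) (c : ℤ) :
    nsq (vj Δv (j + Pi.single s c)) =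
      nsq (vj Δv j) + (2 * vj Δv j s + c * Δv) * (c * Δv) := by
  fin_cases s <;> simp [nsq, vj, Fin.sum_univ_three] <;> ring

/-- The compatibility `D^ε(‖v‖²)_j = 2 ṽ_j^ε`, with the denominator `Δv` cleared. -/
lemma sgn_mul_nsq_shift_sub (Δv : ℝ) (σ : Fin 3 → Bool) (j : J3) (s : Fin 3) :
    (sgn σ s : ℝ) * (nsq (vj Δv (j + Pi.single s (sgn σ s))) - nsq (vj Δv j)) =
      2 * Δv * vtilde Δv σ j s := by
  rw [nsq_shift]
  simp only [vtilde, vj]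
  push_cast
  linear_combination (2 * (j s : ℝ) * Δv ^ 2 + (sgn σ s : ℝ) * Δv ^ 2) * sgn_mul_self σ s

/-- The flux is orthogonal to the averaged velocity, since `w · S(w) u = 0` for all `u`. -/
lemma sum_gflux_mul_vtilde (Δv : ℝ) (σ : Fin 3 → Bool) (f : J3 → ℝ) (j : J3) :
    ∑ s, gflux Δv σ f j s * vtilde Δv σ j s = 0 := by
  have key : ∀ w u : V3, ∑ s, (Smat w).mulVec u s * w s = 0 := by
    intro w u
    simp [Smat, nsq, Matrix.mulVec, dotProduct, Matrix.vecMulVec_apply, Matrix.one_apply,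
      Fin.sum_univ_three]
    ring
  unfold gflux
  split_ifs
  · simp
  · simp only [Pi.smul_apply, smul_eq_mul, mul_assoc]
    rw [← Finset.mul_sum, key, mul_zero]

lemma nsq_shift_le (Δv : ℝ) (σ : Fin 3 → Bool) (j : J3) (s : Fin 3) :
    nsq (vj Δv (j + Pi.single s (sgn σ s))) ≤ (2 + 2 * Δv ^ 2) * (1 + nsq (vj Δv j)) := by
  have h1 : vj Δv j s ^ 2 ≤ nsq (vj Δv j) :=
    Finset.single_le_sum (f := fun t => vj Δv j t ^ 2) (fun t _ => sq_nonneg _)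
      (Finset.mem_univ s)
  have h2 : ((sgn σ s : ℝ) * Δv) ^ 2 = Δv ^ 2 := by
    linear_combination Δv ^ 2 * sgn_mul_self σ s
  have h3 := mul_nonneg (sq_nonneg Δv) (nsq_nonneg (vj Δv j))
  rw [nsq_shift]
  nlinarith [sq_nonneg (vj Δv j s - sgn σ s * Δv)]

lemma summable_flux_mul {Δv : ℝ} {g : J3 → V3} {φ : J3 → ℝ} {C : ℝ}
    (hg : Summable fun j : J3 => ‖g j‖ * (1 + nsq (vj Δv j)))
    (h0 : ∀ j, 0 ≤ φ j) (hφ : ∀ j, φ j ≤ C * (1 + nsq (vj Δv j))) (s : Fin 3) :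
    Summable fun j => g j s * φ j := by
  refine Summable.of_norm_bounded (hg.mul_left C) fun j => ?_
  rw [norm_mul, Real.norm_of_nonneg (h0 j)]
  calc ‖g j s‖ * φ j ≤ ‖g j‖ * (C * (1 + nsq (vj Δv j))) :=
        mul_le_mul (norm_le_pi_norm _ _) (hφ j) (h0 j) (norm_nonneg _)
    _ = _ := by ring

/-- Energy conservation for a single uncentered discretization `ε`. -/
lemma hasSum_Dstar_gflux_mul_nsq (Δv : ℝ) (hΔv : 0 < Δv) (σ : Fin 3 → Bool) (f : J3 → ℝ)
    (hg : Summable fun j : J3 => ‖gflux Δv σ f j‖ * (1 + nsq (vj Δv j))) :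
    HasSum (fun j => -Dstar Δv σ (gflux Δv σ f) j * nsq (vj Δv j)) 0 := by
  set g := gflux Δv σ f with hgdef
  have hA : ∀ s, Summable fun j => g j s * nsq (vj Δv j) := fun s =>
    summable_flux_mul (C := 1) hg (fun j => nsq_nonneg _) (fun j => by linarith) s
  have hB : ∀ s, Summable fun j => g j s * nsq (vj Δv (j + Pi.single s (sgn σ s))) := fun s =>
    summable_flux_mul hg (fun j => nsq_nonneg _) (fun j => nsq_shift_le Δv σ j s) s
  have hB' : ∀ s, HasSum (fun j => g (j - Pi.single s (sgn σ s)) s * nsq (vj Δv j))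
      (∑' j, g j s * nsq (vj Δv (j + Pi.single s (sgn σ s)))) := by
    intro s
    have := (Equiv.subRight (Pi.single s (sgn σ s) : J3)).hasSum_iff.mpr (hB s).hasSum
    simpa [Function.comp_def] using this
  have h1 := hasSum_sum (s := Finset.univ) fun s _ =>
    (((hA s).hasSum.sub (hB' s)).mul_left ((sgn σ s : ℝ) / Δv))
  have h2 := hasSum_sum (s := Finset.univ) fun s _ =>
    (((hA s).hasSum.sub (hB s).hasSum).mul_left ((sgn σ s : ℝ) / Δv))
  -- After the shift, the sum has the same value as a series whose terms vanish identically.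
  have h3 : (fun j => ∑ s, (sgn σ s : ℝ) / Δv * (g j s * nsq (vj Δv j) -
      g j s * nsq (vj Δv (j + Pi.single s (sgn σ s))))) = fun _ => 0 := by
    funext j
    calc _ = ∑ s, (-2) * (g j s * vtilde Δv σ j s) := by
          refine Finset.sum_congr rfl fun s _ => ?_
          have := sgn_mul_nsq_shift_sub Δv σ j s
          field_simp
          linear_combination (-g j s) * this
      _ = 0 := by rw [← Finset.mul_sum, sum_gflux_mul_vtilde, mul_zero]
  rw [h3] at h2
  rw [← h2.unique hasSum_zero]
  refine (congrArg (HasSum · _) (funext fun j => ?_)).mpr h1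
  simp only [Dstar, neg_neg, update_sub_eq, Finset.sum_mul]
  exact Finset.sum_congr rfl fun s _ => by ring

/-- thanks to the compatibility choice ṽ_j^ε = (v_j + v_{j+ε})/2, the
discrete Lorentz operator conserves the discrete kinetic energy. -/
theorem discrete_lorentz_conserves_energy
    (Δv : ℝ) (hΔv : 0 < Δv)
    (f : J3 → ℝ) (hpos : ∀ j, 0 < f j)
    (hsum : ∀ σ : Fin 3 → Bool,
      Summable fun j : J3 => ‖gflux Δv σ f j‖ * (1 + nsq (vj Δv j))) :
    ∑' j : J3, CLdisc Δv f j * nsq (vj Δv j) = 0 := by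
  have h := (hasSum_sum (s := Finset.univ) fun σ _ =>
    hasSum_Dstar_gflux_mul_nsq Δv hΔv σ f (hsum σ)).mul_left (1 / 8)
  rw [Finset.sum_const_zero, mul_zero] at h
  refine Eq.trans (tsum_congr fun j => ?_) h.tsum_eq
  rw [CLdisc, mul_assoc, Finset.sum_mul]
end
end
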